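/- Let m be a positive integer and n ≥ 1. For every ε ∈ (0,1) there exist constants C > 0 and θ > 0 such that for every complex z with Re z > 0 and |arg z| ≤ θ and every x ∈ ℝⁿ: |∫_{ℝⁿ} e^{i x·ξ} e^{-z|ξ|^{2m}} dξ| ≤ C |z|^{-n/(2m)} exp{-(1-ε) ς_m |x|^{2m/(2m-1)} / |z|^{1/(2m-1)}}. -/

import Mathlib

open Real MeasureTheory

/-- The sharp constant `ς_m = (2m-1)·(2m)^{-2m/(2m-1)}·sin(π/(4m-2))`. -/
noncomputable def sigmaConst (m : ℕ) : ℝ :=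
  (2 * (m : ℝ) - 1) * (2 * (m : ℝ)) ^ (-(2 * (m : ℝ)) / (2 * (m : ℝ) - 1)) *
    Real.sin (Real.pi / (4 * (m : ℝ) - 2))

/-!
Rescaling `ξ` reduces the bound to `z` on the unit circle, close to `1`. Moving the domain of
integration from `V` to `V + i b x` multiplies the integrand by `e^{-b‖x‖²}`, and replaces `‖ξ‖²` by
its holomorphic extension `q(ξ + iη)` at `η = b x`. The sharp constant enters through
`Re q(ξ + iη)^m ≥ -sin(π/(4m-2))^{-(2m-1)} ‖η‖^{2m}`, a consequence of the weighted AM-GM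
inequality and the concavity of `sin` on `[0, π]`; any larger multiple of `‖η‖^{2m}` leaves, by
compactness and homogeneity, a margin `c ‖ξ‖^{2m}`, which makes the shifted integral converge and
absorbs the perturbation of `z`. Optimizing over `b` is a Legendre transform.
-/

section Trigonometry

lemma mul_pow_le_weighted_mean_pow (k : ℕ) {x y : ℝ} (hx : 0 ≤ x) (hy : 0 < y) :
    x * y ^ k ≤ ((x + k * y) / (k + 1)) ^ (k + 1) := by
  have hk : (0 : ℝ) < k + 1 := by positivity
  set t := (x / y - 1) / (k + 1) with ht
  have bernoulli : x / y ≤ (1 + t) ^ (k + 1) := by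
    have h_lower : -2 ≤ t := by
      rw [ht, le_div_iff₀ hk]
      nlinarith [div_nonneg hx hy.le, (Nat.cast_nonneg k : (0 : ℝ) ≤ k)]
    calc x / y = 1 + (k + 1 : ℕ) * t := by rw [ht]; push_cast; field_simp; ring
      _ ≤ (1 + t) ^ (k + 1) := one_add_mul_le_pow h_lower _
  calc x * y ^ k = y ^ (k + 1) * (x / y) := by rw [pow_succ]; field_simp
    _ ≤ y ^ (k + 1) * (1 + t) ^ (k + 1) := by gcongr
    _ = ((x + k * y) / (k + 1)) ^ (k + 1) := by
      rw [← mul_pow]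
      congr 1
      rw [ht]
      field_simp
      ring

lemma sin_mul_sin_pow_le (k : ℕ) {a b : ℝ} (ha : a ∈ Set.Icc 0 π) (hb : b ∈ Set.Ioo 0 π) :
    sin a * sin b ^ k ≤ sin ((a + k * b) / (k + 1)) ^ (k + 1) := by
  have ha' := sin_nonneg_of_mem_Icc ha
  have hb' := sin_pos_of_mem_Ioo hb
  have concave : (sin a + k * sin b) / (k + 1) ≤ sin ((a + k * b) / (k + 1)) :=
    calc (sin a + k * sin b) / (k + 1) = 1 / (k + 1) * sin a + k / (k + 1) * sin b := by ring
      _ ≤ sin (1 / (k + 1) * a + k / (k + 1) * b) :=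
        strictConcaveOn_sin_Icc.concaveOn.2 ha (Set.Ioo_subset_Icc_self hb) (by positivity)
          (by positivity) (by field_simp; ring)
      _ = sin ((a + k * b) / (k + 1)) := by congr 1; ring
  calc sin a * sin b ^ k ≤ ((sin a + k * sin b) / (k + 1)) ^ (k + 1) :=
        mul_pow_le_weighted_mean_pow k ha' hb'
    _ ≤ sin ((a + k * b) / (k + 1)) ^ (k + 1) := by gcongr

lemma neg_cos_mul_sin_pow_le_sin_pow {k : ℕ} (hk : k ≠ 0) {φ : ℝ} (h0 : 0 ≤ φ) (h1 : φ ≤ π / 2) :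
    -cos ((k + 1) * φ) * sin (π / (2 * k)) ^ k ≤ sin φ ^ (k + 1) := by
  have hk1 : (1 : ℝ) ≤ k := by exact_mod_cast Nat.one_le_iff_ne_zero.2 hk
  have hα : π / (2 * k) ∈ Set.Ioo 0 π :=
    ⟨by positivity, by rw [div_lt_iff₀ (by positivity)]; nlinarith [pi_pos]⟩
  -- Subtracting the full periods from `(k + 1) φ` only decreases the right-hand side.
  set j := ⌊(k + 1) * φ / (2 * π)⌋₊
  set t := (k + 1) * φ - j * (2 * π) with ht
  have ht0 : 0 ≤ t := by
    have := Nat.floor_le (a := (k + 1) * φ / (2 * π)) (by positivity)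
    rw [le_div_iff₀ two_pi_pos] at this
    linarith
  have ht2 : t < 2 * π := by
    have := Nat.lt_floor_add_one ((k + 1) * φ / (2 * π))
    rw [div_lt_iff₀ two_pi_pos] at this
    linarith
  have htφ : t / (k + 1) ≤ φ := by
    rw [div_le_iff₀ (by positivity), ht]
    nlinarith [pi_pos, (Nat.cast_nonneg j : (0 : ℝ) ≤ j)]
  have hsinα := sin_nonneg_of_mem_Icc (Set.Ioo_subset_Icc_self hα)
  have hsinφ : 0 ≤ sin φ := sin_nonneg_of_nonneg_of_le_pi h0 (by linarith)
  have hsint : 0 ≤ sin (t / (k + 1)) :=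
    sin_nonneg_of_nonneg_of_le_pi (by positivity) (by linarith)
  rw [← cos_sub_nat_mul_two_pi _ j, ← ht]
  rcases le_or_gt 0 (cos t) with hcos | hcos
  · exact (mul_nonpos_of_nonpos_of_nonneg (neg_nonpos.2 hcos) (by positivity)).trans (by positivity)
  have ht_mem : t - π / 2 ∈ Set.Icc 0 π := by
    constructor <;> by_contra! hlt
    · exact hcos.not_ge (cos_nonneg_of_mem_Icc ⟨by linarith [pi_pos], by linarith⟩)
    · refine hcos.not_ge ?_
      rw [← cos_sub_two_pi]
      exact cos_nonneg_of_mem_Icc ⟨by linarith, by linarith [pi_pos]⟩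
  calc -cos t * sin (π / (2 * k)) ^ k
      = sin (t - π / 2) * sin (π / (2 * k)) ^ k := by rw [sin_sub_pi_div_two]
    _ ≤ sin ((t - π / 2 + k * (π / (2 * k))) / (k + 1)) ^ (k + 1) := sin_mul_sin_pow_le k ht_mem hα
    _ = sin (t / (k + 1)) ^ (k + 1) := by congr 3; field_simp; ring
    _ ≤ sin φ ^ (k + 1) := by
      gcongr
      exact sin_le_sin_of_le_of_le_pi_div_two (by linarith [div_nonneg ht0 (by positivity :
        (0 : ℝ) ≤ k + 1), pi_pos]) h1 htφ

lemma norm_mul_sin_sq_half_arg (w : ℂ) : ‖w‖ * sin (w.arg / 2) ^ 2 = (‖w‖ - w.re) / 2 := by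
  rw [sin_sq_eq_half_sub, mul_div_cancel₀ _ two_ne_zero]
  linarith [Complex.norm_mul_cos_arg w]

lemma re_pow_eq_norm_pow_mul_cos (w : ℂ) (m : ℕ) : (w ^ m).re = ‖w‖ ^ m * cos (m * w.arg) := by
  conv_lhs => rw [← Complex.norm_mul_exp_arg_mul_I w, mul_pow, ← Complex.exp_nat_mul,
    ← Complex.ofReal_pow, Complex.re_ofReal_mul, ← mul_assoc]
  exact_mod_cast congrArg (‖w‖ ^ m * ·) (Complex.exp_ofReal_mul_I_re (m * w.arg))

lemma sin_pi_div_four_mul_sub_two_pos {m : ℕ} (hm : 1 ≤ m) : 0 < sin (π / (4 * (m : ℝ) - 2)) := by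
  have hm' : (1 : ℝ) ≤ m := by exact_mod_cast hm
  have hden : (0 : ℝ) < 4 * m - 2 := by linarith
  refine sin_pos_of_pos_of_lt_pi (by positivity) ?_
  rw [div_lt_iff₀ hden]
  nlinarith [pi_pos]

lemma neg_re_pow_mul_sin_pow_le {m : ℕ} (hm : 1 ≤ m) (w : ℂ) :
    -(w ^ m).re * sin (π / (4 * (m : ℝ) - 2)) ^ (2 * m - 1) ≤ ((‖w‖ - w.re) / 2) ^ m := by
  have hcast : ((2 * m - 1 : ℕ) : ℝ) = 2 * m - 1 := by
    push_cast [Nat.cast_sub (show 1 ≤ 2 * m by omega)]; ring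
  have trig := neg_cos_mul_sin_pow_le_sin_pow (k := 2 * m - 1) (by omega)
    (φ := |w.arg| / 2) (by positivity) (by linarith [Complex.abs_arg_le_pi w])
  rw [hcast, show (2 * (m : ℝ) - 1 + 1) * (|w.arg| / 2) = |m * w.arg| by
      rw [abs_mul, Nat.abs_cast]; ring,
    cos_abs, show 2 * (2 * (m : ℝ) - 1) = 4 * m - 2 by ring,
    show 2 * m - 1 + 1 = 2 * m by omega] at trig
  have hsin : sin (|w.arg| / 2) ^ 2 = sin (w.arg / 2) ^ 2 := by
    rw [sin_sq_eq_half_sub, sin_sq_eq_half_sub, mul_div_cancel₀ _ two_ne_zero, cos_abs,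
      mul_div_cancel₀ _ two_ne_zero]
  rw [re_pow_eq_norm_pow_mul_cos, ← norm_mul_sin_sq_half_arg, mul_pow, ← hsin, ← pow_mul,
    ← mul_neg, mul_assoc]
  gcongr

end Trigonometry

section Calculus

lemma norm_pow_le_mul_norm_add_pow_add {E : Type*} [SeminormedAddCommGroup E] (k : ℕ)
    (x y : E) :
    ‖x‖ ^ k ≤ 2 ^ (k - 1) * (‖x + y‖ ^ k + ‖y‖ ^ k) :=
  calc ‖x‖ ^ k ≤ (‖x + y‖ + ‖y‖) ^ k := by
        gcongr
        simpa using norm_sub_le (x + y) y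
    _ ≤ 2 ^ (k - 1) * (‖x + y‖ ^ k + ‖y‖ ^ k) := add_pow_le (norm_nonneg _) (norm_nonneg _) k

lemma exists_pos_forall_mul_norm_pow_le {E : Type*} [NormedAddCommGroup E] [NormedSpace ℝ E]
    [ProperSpace E] {f : E → ℝ} {k : ℕ} (hk : k ≠ 0) (hf : Continuous f)
    (hom : ∀ t : ℝ, 0 ≤ t → ∀ v, f (t • v) = t ^ k * f v) (hpos : ∀ v, v ≠ 0 → 0 < f v) :
    ∃ c > 0, ∀ v, c * ‖v‖ ^ k ≤ f v := by
  have hf0 : f 0 = 0 := by simpa [hk] using hom 0 le_rfl 0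
  suffices h : ∃ c > 0, ∀ v, ‖v‖ = 1 → c ≤ f v by
    obtain ⟨c, hc, hle⟩ := h
    refine ⟨c, hc, fun v => ?_⟩
    rcases eq_or_ne v 0 with rfl | hv
    · simp [hf0, hk]
    calc c * ‖v‖ ^ k ≤ f (‖v‖⁻¹ • v) * ‖v‖ ^ k := by
          gcongr
          exact hle _ (norm_smul_inv_norm (𝕜 := ℝ) hv)
      _ = f v := by
          have := norm_ne_zero_iff.2 hv
          rw [hom _ (by positivity), mul_right_comm, ← mul_pow, inv_mul_cancel₀ this, one_pow,
            one_mul]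
  rcases (Metric.sphere (0 : E) 1).eq_empty_or_nonempty with hempty | hne
  · refine ⟨1, one_pos, fun v hv => ?_⟩
    have : v ∈ Metric.sphere (0 : E) 1 := by simpa using hv
    simp [hempty] at this
  · obtain ⟨v₀, hv₀, hmin⟩ := (isCompact_sphere (0 : E) 1).exists_isMinOn hne hf.continuousOn
    exact ⟨f v₀, hpos v₀ (ne_zero_of_mem_unit_sphere ⟨v₀, hv₀⟩),
      fun v hv => hmin (by simpa using hv)⟩

/-- A Legendre transform: the supremum of `h ↦ h r - h^p / τ^(p-1)`, at the maximizer. -/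
lemma exists_mul_sub_rpow_div_eq {p τ r : ℝ} (hp : 1 < p) (hτ : 0 < τ) (hr : 0 ≤ r) :
    ∃ h ≥ 0,
      h * r - h ^ p / τ ^ (p - 1) = (p - 1) * p ^ (-p / (p - 1)) * τ * r ^ (p / (p - 1)) := by
  have hp1 : 0 < p - 1 := by linarith
  have hp0 : 0 < p := by linarith
  set T := p ^ (-p / (p - 1)) with hT
  have hpT : p * T = p ^ (-1 / (p - 1)) := by
    nth_rw 1 [hT, ← rpow_one p]
    rw [← rpow_add hp0]; congr 1; field_simp; ring
  have hpTp : (p * T) ^ p = T := by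
    rw [hpT, ← rpow_mul hp0.le, hT]; congr 1; ring
  have hr1 : r ^ (1 / (p - 1)) * r = r ^ (p / (p - 1)) := by
    rw [← rpow_add_one' hr (by positivity)]; congr 1; field_simp; ring
  have hrp : (r ^ (1 / (p - 1))) ^ p = r ^ (p / (p - 1)) := by
    rw [← rpow_mul hr]; congr 1; ring
  have hτp : τ ^ p = τ ^ (p - 1) * τ := by rw [← rpow_add_one hτ.ne']; congr 1; ring
  have hT0 : 0 < T := by positivity
  refine ⟨p * T * τ * r ^ (1 / (p - 1)), by positivity, ?_⟩
  rw [mul_rpow (by positivity) (by positivity), mul_rpow (by positivity) hτ.le, hpTp, hrp, hτp,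
    mul_assoc _ (r ^ _) r, hr1]
  have : τ ^ (p - 1) ≠ 0 := by positivity
  field_simp

lemma aestronglyMeasurable_deriv_of_forall {α E : Type*} [MeasurableSpace α] {μ : Measure α}
    [NormedAddCommGroup E] [NormedSpace ℂ E] {F : ℂ → α → E}
    (hmeas : ∀ s, AEStronglyMeasurable (F s) μ) (hdiff : ∀ a, Differentiable ℂ (F · a)) (s : ℂ) :
    AEStronglyMeasurable (fun a => deriv (F · a) s) μ := by
  refine aestronglyMeasurable_of_tendsto_ae (nhdsWithin (0 : ℂ) {0}ᶜ)
    (f := fun t a => t⁻¹ • (F (s + t) a - F s a))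
    (fun t => ((hmeas _).sub (hmeas _)).const_smul _) (.of_forall fun a => ?_)
  exact hasDerivAt_iff_tendsto_slope_zero.1 (hdiff a s).hasDerivAt

lemma differentiable_integral_of_norm_le_mul {α E : Type*} [MeasurableSpace α] {μ : Measure α}
    [NormedAddCommGroup E] [NormedSpace ℂ E] {F : ℂ → α → E} {g : ℂ → ℝ} {B : α → ℝ}
    (hmeas : ∀ s, AEStronglyMeasurable (F s) μ) (hdiff : ∀ a, Differentiable ℂ (F · a))
    (hg : Continuous g) (hB : Integrable B μ) (hle : ∀ s a, ‖F s a‖ ≤ g s * B a) :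
    Differentiable ℂ (fun s => ∫ a, F s a ∂μ) := by
  intro s₀
  obtain ⟨M, hM⟩ := (isCompact_closedBall s₀ 2).exists_bound_of_continuousOn hg.continuousOn
  have bound : ∀ s ∈ Metric.closedBall s₀ 2, ∀ a, ‖F s a‖ ≤ M * ‖B a‖ := fun s hs a =>
    calc ‖F s a‖ ≤ g s * B a := hle s a
      _ ≤ ‖g s‖ * ‖B a‖ := (le_abs_self _).trans_eq (abs_mul _ _)
      _ ≤ M * ‖B a‖ := by gcongr; exact hM s hs
  have cauchy : ∀ s ∈ Metric.ball s₀ 1, ∀ a, ‖deriv (F · a) s‖ ≤ M * ‖B a‖ := by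
    intro s hs a
    have := Complex.norm_deriv_le_of_forall_mem_sphere_norm_le one_pos
      (hdiff a).diffContOnCl (fun s' hs' => bound s' ?_ a) (c := s)
    · simpa using this
    · rw [Metric.mem_closedBall]
      linarith [dist_triangle s' s s₀, Metric.mem_sphere.1 hs', Metric.mem_ball.1 hs]
  have hint : Integrable (fun a => M * ‖B a‖) μ := hB.norm.const_mul M
  exact (hasDerivAt_integral_of_dominated_loc_of_deriv_le (F' := fun s a => deriv (F · a) s)
    (Metric.ball_mem_nhds s₀ one_pos) (.of_forall hmeas)
    (hint.mono' (hmeas s₀) (.of_forall (bound s₀ (Metric.mem_closedBall_self zero_le_two))))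
    (aestronglyMeasurable_deriv_of_forall hmeas hdiff s₀)
    (.of_forall fun a s hs => cauchy s hs a) hint
    (.of_forall fun a s _ => (hdiff a s).hasDerivAt)).2.differentiableAt

lemma eq_of_differentiable_of_ofReal_add_eq {E : Type*} [NormedAddCommGroup E] [NormedSpace ℂ E]
    {f : ℂ → E} (hf : Differentiable ℂ f) (hreal : ∀ (a : ℝ) (s : ℂ), f (a + s) = f s) (s t : ℂ) :
    f s = f t := by
  refine is_const_of_deriv_eq_zero hf (fun u => ?_) s t
  have h_add : HasDerivAt (fun v : ℂ => f (v + u)) (deriv f u) ((0 : ℝ) : ℂ) := by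
    apply HasDerivAt.comp_add_const
    simpa using (hf u).hasDerivAt
  have h_const := h_add.scomp (0 : ℝ) Complex.ofRealCLM.hasDerivAt
  simp only [Function.comp_def, Complex.ofRealCLM_apply, hreal, Complex.ofReal_one,
    one_smul] at h_const
  exact h_const.unique (hasDerivAt_const _ _)

end Calculus

lemma integrable_exp_neg_mul_norm_pow {V : Type*} [NormedAddCommGroup V] [InnerProductSpace ℝ V]
    [FiniteDimensional ℝ V] [MeasurableSpace V] [BorelSpace V] {k : ℕ} (hk : 2 ≤ k) {c : ℝ}
    (hc : 0 < c) : Integrable (fun ξ : V => exp (-(c * ‖ξ‖ ^ k))) := by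
  have gaussian : Integrable (fun ξ : V => exp (-(c * ‖ξ‖ ^ 2))) := by
    have h := (GaussianFourier.integrable_cexp_neg_mul_sq_norm_add (V := V) (b := (c : ℂ))
      (by simpa using hc) 0 0).norm
    refine h.congr (.of_forall fun ξ => ?_)
    simp only [Complex.norm_exp, zero_mul, add_zero, ← Complex.ofReal_neg, ← Complex.ofReal_pow,
      Complex.re_ofReal_mul, Complex.ofReal_re, neg_mul]
  refine (gaussian.const_mul (exp c)).mono' (by fun_prop) (.of_forall fun ξ => ?_)
  have sq_le : ‖ξ‖ ^ 2 ≤ 1 + ‖ξ‖ ^ k := by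
    rcases le_total ‖ξ‖ 1 with h | h
    · linarith [pow_le_one₀ (n := 2) (norm_nonneg ξ) h, pow_nonneg (norm_nonneg ξ) k]
    · linarith [pow_le_pow_right₀ h hk]
  rw [norm_of_nonneg (exp_pos _).le, ← exp_add, exp_le_exp]
  nlinarith

section ComplexNormSq

variable {V : Type*} [NormedAddCommGroup V] [InnerProductSpace ℝ V]

/-- The value at `ξ + iη` of the holomorphic extension of the quadratic form `‖·‖²` to the
complexification of `V`. -/
noncomputable def complexNormSq (ξ η : V) : ℂ :=
  ((‖ξ‖ ^ 2 - ‖η‖ ^ 2 : ℝ) : ℂ) + ((2 * inner ℝ ξ η : ℝ) : ℂ) * Complex.I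

@[simp]
lemma complexNormSq_re (ξ η : V) : (complexNormSq ξ η).re = ‖ξ‖ ^ 2 - ‖η‖ ^ 2 := by
  rw [complexNormSq, Complex.add_re, Complex.re_ofReal_mul, Complex.I_re, Complex.ofReal_re,
    mul_zero, add_zero]

@[simp]
lemma complexNormSq_im (ξ η : V) : (complexNormSq ξ η).im = 2 * inner ℝ ξ η := by
  rw [complexNormSq, Complex.add_im, Complex.im_ofReal_mul, Complex.I_im, Complex.ofReal_im,
    mul_one, zero_add]

lemma complexNormSq_zero_right (ξ : V) : complexNormSq ξ 0 = (‖ξ‖ : ℂ) ^ 2 := by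
  simp [complexNormSq]

lemma complexNormSq_smul_smul (t : ℝ) (ξ η : V) :
    complexNormSq (t • ξ) (t • η) = ((t ^ 2 : ℝ) : ℂ) * complexNormSq ξ η := by
  simp only [complexNormSq, norm_smul, mul_pow, norm_eq_abs, sq_abs, real_inner_smul_left,
    real_inner_smul_right]
  push_cast
  ring

lemma continuous_complexNormSq : Continuous fun v : V × V => complexNormSq v.1 v.2 := by
  unfold complexNormSq
  fun_prop

lemma norm_complexNormSq_le (ξ η : V) : ‖complexNormSq ξ η‖ ≤ ‖ξ‖ ^ 2 + ‖η‖ ^ 2 := by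
  refine (abs_le_of_sq_le_sq' ?_ (by positivity)).2
  have cauchy_schwarz : inner ℝ ξ η ^ 2 ≤ (‖ξ‖ * ‖η‖) ^ 2 := by
    rw [← sq_abs (inner ℝ ξ η)]
    gcongr
    exact abs_real_inner_le_norm ξ η
  rw [Complex.sq_norm, Complex.normSq_apply, complexNormSq_re, complexNormSq_im]
  nlinarith

lemma neg_re_complexNormSq_pow_mul_sin_pow_le {m : ℕ} (hm : 1 ≤ m) (ξ η : V) :
    -(complexNormSq ξ η ^ m).re * sin (π / (4 * (m : ℝ) - 2)) ^ (2 * m - 1) ≤ ‖η‖ ^ (2 * m) := by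
  refine (neg_re_pow_mul_sin_pow_le hm _).trans ?_
  rw [pow_mul]
  gcongr
  · linarith [Complex.re_le_norm (complexNormSq ξ η)]
  · linarith [norm_complexNormSq_le ξ η, complexNormSq_re ξ η]

lemma re_complexNormSq_pow_add_pos {m : ℕ} (hm : 1 ≤ m) {τ : ℝ} (hτ : 0 < τ)
    (hτ' : τ < sin (π / (4 * (m : ℝ) - 2))) {v : V × V} (hv : v ≠ 0) :
    0 < (complexNormSq v.1 v.2 ^ m).re + ‖v.2‖ ^ (2 * m) / τ ^ (2 * m - 1) := by
  rcases eq_or_ne v.2 0 with h2 | h2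
  · have h1 : v.1 ≠ 0 := fun h1 => hv (Prod.ext h1 h2)
    have : 0 < ‖v.1‖ := norm_pos_iff.2 h1
    rw [h2, complexNormSq_zero_right, norm_zero, zero_pow (by omega), zero_div, add_zero,
      ← Complex.ofReal_pow, ← Complex.ofReal_pow, Complex.ofReal_re]
    positivity
  · have hS := sin_pi_div_four_mul_sub_two_pos hm
    have sharp := neg_re_complexNormSq_pow_mul_sin_pow_le hm v.1 v.2
    rw [← le_div_iff₀ (by positivity)] at sharp
    have strict : ‖v.2‖ ^ (2 * m) / sin (π / (4 * (m : ℝ) - 2)) ^ (2 * m - 1) <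
        ‖v.2‖ ^ (2 * m) / τ ^ (2 * m - 1) :=
      div_lt_div_of_pos_left (pow_pos (norm_pos_iff.2 h2) _) (pow_pos hτ _)
        (pow_lt_pow_left₀ hτ' hτ.le (by omega))
    linarith

/-- A Gårding-type inequality: on the complexification of `V`, the real part of the extended symbol
`z ‖ξ‖^{2m}` is at least `c ‖ξ‖^{2m}`, up to `D` times the `2m`-th power of the imaginary part. -/
def SymbolCoercive (V : Type*) [NormedAddCommGroup V] [InnerProductSpace ℝ V] (m : ℕ) (z : ℂ)
    (c D : ℝ) : Prop :=
  ∀ ξ η : V, c * ‖ξ‖ ^ (2 * m) ≤ (z * complexNormSq ξ η ^ m).re + D * ‖η‖ ^ (2 * m)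

lemma exists_symbolCoercive_of_lt_sin [FiniteDimensional ℝ V] {m : ℕ} (hm : 1 ≤ m) {τ : ℝ}
    (hτ : 0 < τ) (hτ' : τ < sin (π / (4 * (m : ℝ) - 2))) :
    ∃ c > 0, ∃ κ > 0, ∀ z : ℂ, ‖z - 1‖ ≤ κ → SymbolCoercive V m z c (τ ^ (2 * m - 1))⁻¹ := by
  obtain ⟨c, hc, hle⟩ := exists_pos_forall_mul_norm_pow_le (E := V × V) (k := 2 * m) (by omega)
    (f := fun v => (complexNormSq v.1 v.2 ^ m).re + ‖v.2‖ ^ (2 * m) / τ ^ (2 * m - 1))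
    ((Complex.continuous_re.comp (continuous_complexNormSq.pow m)).add (by fun_prop))
    (fun t ht v => by
      simp only [Prod.smul_fst, Prod.smul_snd, complexNormSq_smul_smul, norm_smul, mul_pow,
        norm_of_nonneg ht, ← Complex.ofReal_pow, ← pow_mul, Complex.re_ofReal_mul]
      ring)
    (fun v hv => re_complexNormSq_pow_add_pos hm hτ hτ' hv)
  refine ⟨c / 2, by positivity, c / 2 ^ (m + 1), by positivity, fun z hz ξ η => ?_⟩
  set M := ‖(ξ, η)‖
  have hξ : ‖ξ‖ ≤ M := norm_fst_le (ξ, η)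
  have perturbation : -((z - 1) * complexNormSq ξ η ^ m).re ≤ c / 2 * M ^ (2 * m) :=
    calc -((z - 1) * complexNormSq ξ η ^ m).re ≤ ‖(z - 1) * complexNormSq ξ η ^ m‖ :=
          (neg_le_abs _).trans (Complex.abs_re_le_norm _)
      _ = ‖z - 1‖ * ‖complexNormSq ξ η‖ ^ m := by rw [norm_mul, norm_pow]
      _ ≤ c / 2 ^ (m + 1) * (M ^ 2 + M ^ 2) ^ m := by
          gcongr
          exact (norm_complexNormSq_le ξ η).trans (by gcongr; exact norm_snd_le (ξ, η))
      _ = c / 2 * M ^ (2 * m) := by rw [← two_mul, mul_pow, ← pow_mul]; field_simp; ring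
  have split : (z * complexNormSq ξ η ^ m).re =
      (complexNormSq ξ η ^ m).re + ((z - 1) * complexNormSq ξ η ^ m).re := by
    rw [← Complex.add_re]; congr 1; ring
  have unperturbed : c * M ^ (2 * m) ≤
      (complexNormSq ξ η ^ m).re + ‖η‖ ^ (2 * m) / τ ^ (2 * m - 1) := hle (ξ, η)
  calc c / 2 * ‖ξ‖ ^ (2 * m) ≤ c / 2 * M ^ (2 * m) := by gcongr
    _ ≤ (z * complexNormSq ξ η ^ m).re + (τ ^ (2 * m - 1))⁻¹ * ‖η‖ ^ (2 * m) := by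
      rw [inv_mul_eq_div]; linarith

end ComplexNormSq

section ShiftedIntegrand

variable {V : Type*} [NormedAddCommGroup V] [InnerProductSpace ℝ V]

/-- The integrand `e^{i⟨x, ξ⟩} e^{-z‖ξ‖^{2m}}`, extended holomorphically to the complexification of
`V` and evaluated at `ξ + s x`. It is written as a polynomial expression in `s`, so that it is
visibly entire. -/
noncomputable def shiftedIntegrand (m : ℕ) (z : ℂ) (x : V) (s : ℂ) (ξ : V) : ℂ :=
  Complex.exp (Complex.I * (((inner ℝ x ξ : ℝ) : ℂ) + s * (‖x‖ : ℂ) ^ 2)) *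
    Complex.exp (-z * ((‖ξ‖ : ℂ) ^ 2 + 2 * s * ((inner ℝ x ξ : ℝ) : ℂ) +
      s ^ 2 * (‖x‖ : ℂ) ^ 2) ^ m)

lemma continuous_shiftedIntegrand (m : ℕ) (z : ℂ) (x : V) (s : ℂ) :
    Continuous (shiftedIntegrand m z x s) := by
  unfold shiftedIntegrand
  fun_prop

lemma differentiable_shiftedIntegrand (m : ℕ) (z : ℂ) (x ξ : V) :
    Differentiable ℂ (shiftedIntegrand m z x · ξ) := by
  unfold shiftedIntegrand
  fun_prop

lemma shiftedIntegrand_ofReal_add (m : ℕ) (z : ℂ) (x : V) (a : ℝ) (s : ℂ) (ξ : V) :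
    shiftedIntegrand m z x (a + s) ξ = shiftedIntegrand m z x s (ξ + a • x) := by
  have h_inner : (inner ℝ x (ξ + a • x) : ℝ) = inner ℝ x ξ + a * ‖x‖ ^ 2 := by
    rw [inner_add_right, inner_smul_right, real_inner_self_eq_norm_sq]
  have h_sq : ‖ξ + a • x‖ ^ 2 = ‖ξ‖ ^ 2 + 2 * a * inner ℝ x ξ + a ^ 2 * ‖x‖ ^ 2 := by
    rw [norm_add_sq_real, inner_smul_right, norm_smul, mul_pow, norm_eq_abs, sq_abs,
      real_inner_comm]
    ring
  rw [shiftedIntegrand, shiftedIntegrand, h_inner, ← Complex.ofReal_pow ‖ξ + a • x‖, h_sq]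
  push_cast
  ring_nf

lemma complexNormSq_add_smul (x ξ : V) (s : ℂ) :
    complexNormSq (ξ + s.re • x) (s.im • x) =
      (‖ξ‖ : ℂ) ^ 2 + 2 * s * ((inner ℝ x ξ : ℝ) : ℂ) + s ^ 2 * (‖x‖ : ℂ) ^ 2 := by
  rw [complexNormSq, norm_add_sq_real, inner_add_left, real_inner_smul_right, real_inner_smul_right,
    real_inner_smul_left, real_inner_smul_right, real_inner_self_eq_norm_sq, norm_smul, norm_smul,
    mul_pow, mul_pow, norm_eq_abs, norm_eq_abs, sq_abs, sq_abs, real_inner_comm x ξ]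
  conv_rhs => rw [← Complex.re_add_im s]
  push_cast
  linear_combination (-(s.im : ℂ) ^ 2 * (‖x‖ : ℂ) ^ 2) * Complex.I_sq

lemma norm_shiftedIntegrand (m : ℕ) (z : ℂ) (x : V) (s : ℂ) (ξ : V) :
    ‖shiftedIntegrand m z x s ξ‖ =
      exp (-(s.im * ‖x‖ ^ 2) - (z * complexNormSq (ξ + s.re • x) (s.im • x) ^ m).re) := by
  rw [shiftedIntegrand, norm_mul, Complex.norm_exp, Complex.norm_exp, ← exp_add,
    complexNormSq_add_smul, neg_mul, Complex.neg_re, ← sub_eq_add_neg]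
  congr 2
  rw [Complex.I_mul_re, Complex.add_im, Complex.ofReal_im, zero_add, ← Complex.ofReal_pow,
    Complex.im_mul_ofReal]

lemma norm_shiftedIntegrand_le {m : ℕ} {z : ℂ} {c D : ℝ} (H : SymbolCoercive V m z c D) (x : V)
    (s : ℂ) (ξ : V) :
    ‖shiftedIntegrand m z x s ξ‖ ≤ exp (-(s.im * ‖x‖ ^ 2) + D * ‖s.im • x‖ ^ (2 * m)) *
      exp (-(c * ‖ξ + s.re • x‖ ^ (2 * m))) := by
  rw [norm_shiftedIntegrand, ← exp_add, exp_le_exp]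
  linarith [H (ξ + s.re • x) (s.im • x)]

variable [FiniteDimensional ℝ V] [MeasurableSpace V] [BorelSpace V]

lemma differentiable_integral_shiftedIntegrand {m : ℕ} (hm : 1 ≤ m) {z : ℂ} {c D : ℝ} (hc : 0 < c)
    (H : SymbolCoercive V m z c D) (x : V) :
    Differentiable ℂ (fun s => ∫ ξ, shiftedIntegrand m z x s ξ) := by
  set c' := c / 2 ^ (2 * m - 1) with hc'
  refine differentiable_integral_of_norm_le_mul
    (g := fun s => exp (-(s.im * ‖x‖ ^ 2) + D * ‖s.im • x‖ ^ (2 * m) +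
      c * ‖s.re • x‖ ^ (2 * m)))
    (B := fun ξ => exp (-(c' * ‖ξ‖ ^ (2 * m))))
    (fun s => (continuous_shiftedIntegrand m z x s).aestronglyMeasurable)
    (differentiable_shiftedIntegrand m z x) (by fun_prop)
    (integrable_exp_neg_mul_norm_pow (by omega) (by positivity)) (fun s ξ => ?_)
  refine (norm_shiftedIntegrand_le H x s ξ).trans ?_
  have translated : c' * ‖ξ‖ ^ (2 * m) ≤
      c * ‖ξ + s.re • x‖ ^ (2 * m) + c * ‖s.re • x‖ ^ (2 * m) :=
    calc c' * ‖ξ‖ ^ (2 * m)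
        ≤ c' * (2 ^ (2 * m - 1) * (‖ξ + s.re • x‖ ^ (2 * m) + ‖s.re • x‖ ^ (2 * m))) := by
          gcongr
          exact norm_pow_le_mul_norm_add_pow_add _ _ _
      _ = c * ‖ξ + s.re • x‖ ^ (2 * m) + c * ‖s.re • x‖ ^ (2 * m) := by rw [hc']; field_simp
  rw [← exp_add, ← exp_add, exp_le_exp]
  linarith

lemma integral_shiftedIntegrand_eq {m : ℕ} (hm : 1 ≤ m) {z : ℂ} {c D : ℝ} (hc : 0 < c)
    (H : SymbolCoercive V m z c D) (x : V) (s : ℂ) :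
    ∫ ξ, shiftedIntegrand m z x s ξ = ∫ ξ, shiftedIntegrand m z x 0 ξ := by
  refine eq_of_differentiable_of_ofReal_add_eq
    (differentiable_integral_shiftedIntegrand hm hc H x) (fun a s => ?_) s 0
  simp only [shiftedIntegrand_ofReal_add]
  exact integral_add_right_eq_self _ (a • x)

end ShiftedIntegrand

section Kernel

variable {V : Type*} [NormedAddCommGroup V] [InnerProductSpace ℝ V] [FiniteDimensional ℝ V]
  [MeasurableSpace V] [BorelSpace V]

/-- The kernel of the semigroup `e^{-z(-Δ)^m}` on `V` at complex time `z`, without the factor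
`(2π)^{-dim V}`. -/
noncomputable def polyharmonicKernel (m : ℕ) (z : ℂ) (x : V) : ℂ :=
  ∫ ξ : V, Complex.exp (Complex.I * ((inner ℝ x ξ : ℝ) : ℂ)) *
    Complex.exp (-z * ((‖ξ‖ ^ (2 * m) : ℝ) : ℂ))

lemma polyharmonicKernel_eq_integral_shiftedIntegrand (m : ℕ) (z : ℂ) (x : V) :
    polyharmonicKernel m z x = ∫ ξ, shiftedIntegrand m z x 0 ξ := by
  simp [polyharmonicKernel, shiftedIntegrand, pow_mul]

lemma polyharmonicKernel_pow_mul_smul (m : ℕ) (t : ℝ) (z : ℂ) (x : V) :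
    polyharmonicKernel m (((t ^ (2 * m) : ℝ) : ℂ) * z) (t • x) =
      |(t ^ Module.finrank ℝ V)⁻¹| • polyharmonicKernel m z x := by
  rw [polyharmonicKernel, polyharmonicKernel, ← Measure.integral_comp_smul]
  congr 1 with ξ
  rw [real_inner_smul_left, real_inner_smul_right, norm_smul, mul_pow, norm_eq_abs,
    (even_two_mul m).pow_abs]
  push_cast
  ring_nf

lemma norm_polyharmonicKernel_le {m : ℕ} (hm : 1 ≤ m) {z : ℂ} {c D : ℝ} (hc : 0 < c)
    (H : SymbolCoercive V m z c D) (x : V) (b : ℝ) :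
    ‖polyharmonicKernel m z x‖ ≤
      (∫ ξ : V, exp (-(c * ‖ξ‖ ^ (2 * m)))) *
        exp (-(b * ‖x‖ ^ 2) + D * ‖b • x‖ ^ (2 * m)) := by
  rw [polyharmonicKernel_eq_integral_shiftedIntegrand,
    ← integral_shiftedIntegrand_eq hm hc H x (b * Complex.I), mul_comm (∫ ξ : V, _),
    ← integral_const_mul]
  refine norm_integral_le_of_norm_le
    ((integrable_exp_neg_mul_norm_pow (by omega) hc).const_mul _) (.of_forall fun ξ => ?_)
  simpa using norm_shiftedIntegrand_le H x (b * Complex.I) ξ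

lemma exists_norm_polyharmonicKernel_le_of_norm_sub_one_le {m : ℕ} (hm : 1 ≤ m) {τ : ℝ} (hτ : 0 < τ)
    (hτ' : τ < sin (π / (4 * (m : ℝ) - 2))) :
    ∃ C > 0, ∃ κ > 0, ∀ z : ℂ, ‖z - 1‖ ≤ κ → ∀ x : V,
      ‖polyharmonicKernel m z x‖ ≤
        C * exp (-((2 * (m : ℝ) - 1) * (2 * (m : ℝ)) ^ (-(2 * (m : ℝ)) / (2 * (m : ℝ) - 1)) * τ *
          ‖x‖ ^ (2 * (m : ℝ) / (2 * (m : ℝ) - 1)))) := by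
  have hm' : (1 : ℝ) ≤ m := by exact_mod_cast hm
  obtain ⟨c, hc, κ, hκ, H⟩ := exists_symbolCoercive_of_lt_sin (V := V) hm hτ hτ'
  have hint := integrable_exp_neg_mul_norm_pow (V := V) (k := 2 * m) (by omega) hc
  refine ⟨_, integral_exp_pos hint, κ, hκ, fun z hz x => ?_⟩
  obtain ⟨h, hh, legendre⟩ :=
    exists_mul_sub_rpow_div_eq (p := 2 * m) (by linarith) hτ (norm_nonneg x)
  have hτ_pow : τ ^ (2 * (m : ℝ) - 1) = τ ^ (2 * m - 1) := by
    rw [← rpow_natCast, Nat.cast_sub (by omega)]; push_cast; rfl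
  have hh_pow : h ^ (2 * (m : ℝ)) = h ^ (2 * m) := by rw [← rpow_natCast]; push_cast; rfl
  rw [← legendre, hτ_pow, hh_pow]
  rcases eq_or_ne x 0 with rfl | hx
  · refine (norm_polyharmonicKernel_le hm hc (H z hz) 0 0).trans ?_
    gcongr
    simp only [norm_zero, mul_zero, smul_zero]
    rw [zero_pow (by omega), zero_pow (by omega)]
    simp only [mul_zero, neg_zero, add_zero, zero_sub, neg_neg]
    positivity
  have hx' : ‖x‖ ≠ 0 := norm_ne_zero_iff.2 hx
  have h_sq : h / ‖x‖ * ‖x‖ ^ 2 = h * ‖x‖ := by field_simp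
  have h_smul : ‖(h / ‖x‖) • x‖ = h := by
    rw [norm_smul, norm_of_nonneg (by positivity), div_mul_cancel₀ _ hx']
  convert norm_polyharmonicKernel_le hm hc (H z hz) x (h / ‖x‖) using 3
  rw [h_sq, h_smul]
  ring

theorem complex_time_kernel_gaussian_bound_general {m : ℕ} (hm : 1 ≤ m) {ε : ℝ}
    (hε : ε ∈ Set.Ioo (0 : ℝ) 1) :
    ∃ C > (0 : ℝ), ∃ θ > (0 : ℝ), ∀ z : ℂ, z ≠ 0 → |z.arg| ≤ θ → ∀ x : V,
      ‖polyharmonicKernel m z x‖ ≤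
        C * ‖z‖ ^ (-(Module.finrank ℝ V : ℝ) / (2 * (m : ℝ))) *
          exp (-((1 - ε) * sigmaConst m) *
            ‖x‖ ^ ((2 * (m : ℝ)) / (2 * (m : ℝ) - 1)) / ‖z‖ ^ (1 / (2 * (m : ℝ) - 1))) := by
  have hm0 : (m : ℝ) ≠ 0 := by exact_mod_cast Nat.one_le_iff_ne_zero.1 hm
  have hS := sin_pi_div_four_mul_sub_two_pos hm
  obtain ⟨C, hC, κ, hκ, near_one⟩ :=
    exists_norm_polyharmonicKernel_le_of_norm_sub_one_le (V := V) hm (mul_pos (sub_pos.2 hε.2) hS)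
      (mul_lt_of_lt_one_left hS (by linarith [hε.1]))
  refine ⟨C, hC, κ, hκ, fun z hz harg x => ?_⟩
  have hz' : 0 < ‖z‖ := norm_pos_iff.2 hz
  set u := Complex.exp (Complex.I * z.arg) with hu
  have hu1 : ‖u - 1‖ ≤ κ := norm_exp_I_mul_ofReal_sub_one_le.trans harg
  set t := ‖z‖ ^ (1 / (2 * (m : ℝ))) with ht
  have ht0 : 0 < t := by positivity
  have hzt : z = ((t ^ (2 * m) : ℝ) : ℂ) * u := by
    rw [ht, ← rpow_mul_natCast hz'.le, Nat.cast_mul, Nat.cast_ofNat,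
      one_div_mul_cancel (mul_ne_zero two_ne_zero hm0), rpow_one, hu, mul_comm Complex.I,
      Complex.norm_mul_exp_arg_mul_I]
  have ht_dim : (t ^ Module.finrank ℝ V)⁻¹ = ‖z‖ ^ (-(Module.finrank ℝ V : ℝ) / (2 * (m : ℝ))) := by
    rw [ht, ← rpow_mul_natCast hz'.le, ← rpow_neg hz'.le]; congr 1; ring
  have ht_exp : ‖t⁻¹ • x‖ ^ (2 * (m : ℝ) / (2 * (m : ℝ) - 1)) =
      ‖x‖ ^ (2 * (m : ℝ) / (2 * (m : ℝ) - 1)) / ‖z‖ ^ (1 / (2 * (m : ℝ) - 1)) := by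
    rw [norm_smul, norm_inv, norm_of_nonneg ht0.le, inv_mul_eq_div,
      div_rpow (norm_nonneg x) ht0.le, ht, ← rpow_mul hz'.le]
    congr 2; field_simp [hm0]
  have scaling := polyharmonicKernel_pow_mul_smul m t u (t⁻¹ • x)
  rw [← hzt, smul_inv_smul₀ ht0.ne', abs_of_pos (by positivity), ht_dim] at scaling
  rw [scaling, norm_smul, norm_of_nonneg (by positivity), mul_comm C, mul_assoc]
  gcongr
  refine (near_one u hu1 (t⁻¹ • x)).trans_eq ?_
  rw [ht_exp, sigmaConst]
  congr 2
  ring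

end Kernel

/-- for every `ε ∈ (0,1)` there exist `C > 0` and `θ > 0` such that for every
complex `z` with `Re z > 0` and `|arg z| ≤ θ` and every `x ∈ ℝⁿ`,
`|∫_{ℝⁿ} e^{i x·ξ} e^{-z|ξ|^{2m}} dξ|
  ≤ C |z|^{-n/(2m)} exp{-(1-ε) ς_m |x|^{2m/(2m-1)} / |z|^{1/(2m-1)}}`. -/
theorem complex_time_kernel_gaussian_bound (n m : ℕ) (hn : 1 ≤ n) (hm : 1 ≤ m) :
    ∀ ε ∈ Set.Ioo (0 : ℝ) 1, ∃ C > (0 : ℝ), ∃ θ > (0 : ℝ),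
      ∀ z : ℂ, 0 < z.re → |z.arg| ≤ θ → ∀ x : EuclideanSpace ℝ (Fin n),
      ‖∫ ξ : EuclideanSpace ℝ (Fin n),
          Complex.exp (Complex.I * ((inner ℝ x ξ : ℝ) : ℂ)) *
            Complex.exp (-z * ((‖ξ‖ ^ (2 * m) : ℝ) : ℂ))‖ ≤
        C * ‖z‖ ^ (-(n : ℝ) / (2 * (m : ℝ))) *
          Real.exp (-((1 - ε) * sigmaConst m) *
            ‖x‖ ^ ((2 * (m : ℝ)) / (2 * (m : ℝ) - 1)) / ‖z‖ ^ (1 / (2 * (m : ℝ) - 1))) := by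
  intro ε hε
  obtain ⟨C, hC, θ, hθ, bound⟩ :=
    complex_time_kernel_gaussian_bound_general (V := EuclideanSpace ℝ (Fin n)) hm hε
  refine ⟨C, hC, θ, hθ, fun z hz harg x => ?_⟩
  simpa only [finrank_euclideanSpace_fin, polyharmonicKernel] using
    bound z (Complex.ne_zero_of_re_pos hz) harg x
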